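/- There exist constants K > 0 and C > 0 such that the following holds. Let n ≥ 2 and m ≥ 1 be integers and p ∈ (0,1), and let Y_1,...,Y_n be i.i.d. Binomial(m,p) random variables. Set Z_i = (Y_i − mp)/√(mp(1−p)). If mp(1−p) ≥ K·((ln n)^3 + m^{6/7}), then |E[max_{1≤i≤n} Z_i] − √(2 ln n)| ≤ C. -/

import Mathlib

open Finset

/-- The maximum entry of a tuple `j : Fin n → Fin (m+1)`, as a natural number. -/
def maxEntry {n m : ℕ} (j : Fin n → Fin (m + 1)) : ℕ :=
  Finset.univ.sup (fun i => (j i : ℕ))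

/-- The probability `P(Y = k)` for `Y ~ Binomial(m, p)`. -/
noncomputable def binomPMF (m : ℕ) (p : ℝ) (k : ℕ) : ℝ :=
  (Nat.choose m k : ℝ) * p ^ k * (1 - p) ^ (m - k)

/-- Expected value of `max_i Y_i` for `Y_1, …, Y_n` i.i.d. `Binomial(m, p)`. -/
noncomputable def expMaxBinom (n m : ℕ) (p : ℝ) : ℝ :=
  ∑ j : Fin n → Fin (m + 1), (∏ i, binomPMF m p (j i : ℕ)) * (maxEntry j : ℝ)

/-!
Write `Λ` for the cumulant generating function of a centred variable `X` of variance `σ²`, `n` for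
the number of independent copies and `t = √(2 log n)`. By Jensen's inequality
`s * E[max X_i] ≤ log n + Λ s`. For the lower bound, tilt the law of `X` by `exp (s * X)`: the
tilted variable has mean `Λ' s` and variance `Λ'' s`, so Chebyshev's inequality under the tilted law
and the size of the density bound `P(X ≥ Λ' s - c)` from below. The binomial distribution satisfies
`σ² e^{-s} ≤ Λ'' s ≤ σ² e^s` for `s ≥ 0`, and for `s = O(t / σ)` the errors made by replacing `Λ s`
with `σ² s² / 2` are of order `σ² s³ = O(t³ / σ)`, which is bounded as soon as `σ² ≥ 8 (log n)³`.
-/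

section Maximum

open MeasureTheory ProbabilityTheory Real

variable {Ω ι : Type*} {mΩ : MeasurableSpace Ω} {μ : Measure Ω} {X : ι → Ω → ℝ} {s : ℝ}

lemma integrable_iSup_of_finite [Finite ι] (hX : ∀ i, Integrable (X i) μ) :
    Integrable (fun ω ↦ ⨆ i, X i ω) μ := by
  have := Fintype.ofFinite ι
  refine (integrable_finsetSum univ fun i _ ↦ (hX i).norm).mono'
    (AEMeasurable.iSup fun i ↦ (hX i).aemeasurable).aestronglyMeasurable (ae_of_all _ fun ω ↦ ?_)
  cases isEmpty_or_nonempty ι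
  · simp
  obtain ⟨i, hi⟩ := exists_eq_ciSup_of_finite (f := fun i ↦ X i ω)
  rw [← hi]
  exact single_le_sum (f := fun i ↦ ‖X i ω‖) (fun i _ ↦ norm_nonneg _) (mem_univ i)

lemma mul_integral_iSup_le_log_sum_mgf [IsProbabilityMeasure μ] [Fintype ι] [Nonempty ι]
    (hX : ∀ i, Integrable (X i) μ) (h_exp : ∀ i, Integrable (fun ω ↦ exp (s * X i ω)) μ) :
    s * ∫ ω, ⨆ i, X i ω ∂μ ≤ log (∑ i, mgf (X i) μ s) := by
  set M := ∑ i, mgf (X i) μ s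
  have M_pos : 0 < M := sum_pos (fun i _ ↦ mgf_pos (h_exp i)) univ_nonempty
  have h_iSup := integrable_iSup_of_finite hX
  have h_tangent (ω : Ω) : s * (⨆ i, X i ω) + (1 - log M) ≤ (∑ i, exp (s * X i ω)) / M := by
    obtain ⟨i, hi⟩ := exists_eq_ciSup_of_finite (f := fun i ↦ X i ω)
    calc s * (⨆ i, X i ω) + (1 - log M) = (s * X i ω - log M) + 1 := by rw [← hi]; ring
      _ ≤ exp (s * X i ω - log M) := add_one_le_exp _
      _ = exp (s * X i ω) / M := by rw [exp_sub, exp_log M_pos]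
      _ ≤ (∑ i, exp (s * X i ω)) / M := by
        gcongr
        exact single_le_sum (f := fun i ↦ exp (s * X i ω)) (fun i _ ↦ (exp_pos _).le) (mem_univ i)
  have h_int := integral_mono ((h_iSup.const_mul s).add (integrable_const _))
    ((integrable_finsetSum univ fun i _ ↦ h_exp i).div_const M) h_tangent
  have h_right : ∫ ω, (∑ i, exp (s * X i ω)) / M ∂μ = 1 := by
    rw [integral_div, integral_finsetSum _ fun i _ ↦ h_exp i]
    exact div_self M_pos.ne'
  rw [h_right, integral_add' (h_iSup.const_mul s) (integrable_const _), integral_const_mul,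
    integral_const, probReal_univ, one_smul] at h_int
  linarith

lemma integral_le_integral_iSup [Finite ι] (hX : ∀ i, Integrable (X i) μ) (i : ι) :
    ∫ ω, X i ω ∂μ ≤ ∫ ω, ⨆ i, X i ω ∂μ :=
  integral_mono (hX i) (integrable_iSup_of_finite hX) fun ω ↦
    le_ciSup (f := fun i ↦ X i ω) (Set.finite_range _).bddAbove i

lemma mul_one_sub_prod_sub_integral_abs_le_integral_iSup [IsProbabilityMeasure μ] [Fintype ι]
    (h_indep : iIndepFun X μ) (hX : ∀ i, Integrable (X i) μ) (y : ℝ) (i₀ : ι) :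
    y * (1 - ∏ i, μ.real {ω | X i ω < y}) - ∫ ω, |X i₀ ω| ∂μ ≤ ∫ ω, ⨆ i, X i ω ∂μ := by
  set A : Set Ω := ⋂ i, {ω | X i ω < y} with hA
  have A_meas : NullMeasurableSet A μ :=
    .iInter fun i ↦ nullMeasurableSet_lt (hX i).aemeasurable aemeasurable_const
  have A_prob : μ.real A = ∏ i, μ.real {ω | X i ω < y} := by
    have := h_indep.meas_iInter (s := fun i ↦ {ω | X i ω < y})
      fun i ↦ ⟨Set.Iio y, measurableSet_Iio, rfl⟩
    simp only [measureReal_def, hA, this, ENNReal.toReal_prod]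
  have h_indicator : Integrable (A.indicator (1 : Ω → ℝ)) μ :=
    (integrable_const 1).indicator₀ A_meas
  have h_pointwise (ω : Ω) : y * (1 - A.indicator 1 ω) - |X i₀ ω| ≤ ⨆ i, X i ω := by
    have h_le (i : ι) : X i ω ≤ ⨆ i, X i ω :=
      le_ciSup (f := fun i ↦ X i ω) (Set.finite_range _).bddAbove i
    by_cases hω : ω ∈ A
    · simpa [hω] using (neg_abs_le _).trans (h_le i₀)
    · obtain ⟨i, hi⟩ : ∃ i, y ≤ X i ω := by simpa [hA] using hω
      simpa [hω] using (hi.trans (h_le i)).trans (le_add_of_nonneg_right (abs_nonneg (X i₀ ω)))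
  have h_left : Integrable (fun ω ↦ y * (1 - A.indicator 1 ω)) μ :=
    ((integrable_const 1).sub h_indicator).const_mul y
  refine le_trans (le_of_eq ?_) (integral_mono (h_left.sub (hX i₀).abs)
    (integrable_iSup_of_finite hX) h_pointwise)
  rw [integral_sub' h_left (hX i₀).abs, integral_const_mul,
    integral_sub (integrable_const 1) h_indicator, integral_indicator₀ A_meas]
  simp [A_prob]

end Maximum

section ExponentialTilting

open MeasureTheory ProbabilityTheory Real

variable {Ω : Type*} {mΩ : MeasurableSpace Ω} {μ : Measure Ω} {X : Ω → ℝ} {s c : ℝ}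

lemma one_sub_variance_div_sq_le_measureReal [IsProbabilityMeasure μ] (hX : MemLp X 2 μ)
    (hc : 0 < c) : 1 - Var[X; μ] / c ^ 2 ≤ μ.real {ω | |X ω - μ[X]| < c} := by
  have h_compl : {ω | |X ω - μ[X]| < c}ᶜ = {ω | c ≤ |X ω - μ[X]|} := by
    ext
    simp
  have h_chebyshev : μ.real {ω | c ≤ |X ω - μ[X]|} ≤ Var[X; μ] / c ^ 2 :=
    ENNReal.toReal_le_of_le_ofReal (div_nonneg (variance_nonneg X μ) (sq_nonneg c))
      (meas_ge_le_variance_div_sq hX hc)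
  have h_union := measureReal_union_le (μ := μ) {ω | |X ω - μ[X]| < c} {ω | |X ω - μ[X]| < c}ᶜ
  rw [Set.union_compl_self, probReal_univ, h_compl] at h_union
  linarith

lemma tilted_real_le_exp_mul_measureReal [IsFiniteMeasure μ] {E : Set Ω} {b : ℝ}
    (h_exp : Integrable (fun ω ↦ exp (s * X ω)) μ) (hs : 0 ≤ s) (hE : ∀ ω ∈ E, X ω ≤ b) :
    (μ.tilted (s * X ·)).real E ≤ exp (s * b - cgf X μ s) * μ.real E := by
  rw [measureReal_def, tilted_mul_apply_eq_ofReal_integral_cgf E h_exp,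
    ENNReal.toReal_ofReal (integral_nonneg fun ω ↦ (exp_pos _).le)]
  refine (le_norm_self _).trans
    (norm_setIntegral_le_of_norm_le_const (measure_lt_top μ E) fun ω hω ↦ ?_)
  rw [norm_of_nonneg (exp_pos _).le]
  gcongr
  exact hE ω hω

lemma exp_mul_one_sub_le_measureReal_of_tilted [IsProbabilityMeasure μ]
    (hs : s ∈ interior (integrableExpSet X μ)) (hs₀ : 0 ≤ s) (hc : 0 < c) :
    exp (cgf X μ s - s * (deriv (cgf X μ) s + c)) *
        (1 - iteratedDeriv 2 (cgf X μ) s / c ^ 2) ≤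
      μ.real {ω | deriv (cgf X μ) s - c ≤ X ω} := by
  have h_exp : s ∈ integrableExpSet X μ := interior_subset hs
  have h_prob : IsProbabilityMeasure (μ.tilted (s * X ·)) := isProbabilityMeasure_tilted h_exp
  set a := deriv (cgf X μ) s
  set E : Set Ω := {ω | |X ω - a| < c}
  have h_chebyshev : 1 - iteratedDeriv 2 (cgf X μ) s / c ^ 2 ≤ (μ.tilted (s * X ·)).real E := by
    simpa only [variance_tilted_mul hs, integral_tilted_mul_self hs] using
      one_sub_variance_div_sq_le_measureReal (memLp_tilted_mul hs 2) hc
  have h_tilted : (μ.tilted (s * X ·)).real E ≤ exp (s * (a + c) - cgf X μ s) * μ.real E :=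
    tilted_real_le_exp_mul_measureReal h_exp hs₀ fun ω hω ↦ by
      linarith [(abs_lt.mp (show |X ω - a| < c from hω)).2]
  calc exp (cgf X μ s - s * (a + c)) * (1 - iteratedDeriv 2 (cgf X μ) s / c ^ 2)
      ≤ exp (cgf X μ s - s * (a + c)) * (exp (s * (a + c) - cgf X μ s) * μ.real E) := by
        gcongr
        exact h_chebyshev.trans h_tilted
    _ = μ.real E := by rw [← mul_assoc, ← exp_add]; simp
    _ ≤ μ.real {ω | a - c ≤ X ω} := measureReal_mono fun ω hω ↦ by
        change a - c ≤ X ω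
        linarith [(abs_lt.mp (show |X ω - a| < c from hω)).1]

end ExponentialTilting

lemma exp_le_one_add_two_mul {x : ℝ} (hx : 0 ≤ x) (hx₁ : x ≤ 1) : Real.exp x ≤ 1 + 2 * x := by
  have h_taylor := (abs_le.mp (Real.abs_exp_sub_one_sub_id_le (abs_le.mpr ⟨by linarith, hx₁⟩))).2
  have h_sq : x ^ 2 ≤ x := pow_le_of_le_one hx hx₁ two_ne_zero
  linarith

/-- A centred random variable `X` with finite exponential moments whose cumulant generating
function `Λ` satisfies `V * exp (-s) ≤ Λ'' s ≤ V * exp s` for `s ≥ 0`. Since `Λ'' s` is the variance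
of `X` under the measure with density proportional to `exp (s * X)`, this says that `X` has variance
`V` and looks Gaussian under exponential tilts of bounded size. -/
structure NearGaussianCgf {Ω : Type*} {mΩ : MeasurableSpace Ω} (X : Ω → ℝ) (V : ℝ)
    (μ : MeasureTheory.Measure Ω) : Prop where
  integrable_exp_mul (s : ℝ) : MeasureTheory.Integrable (fun ω ↦ Real.exp (s * X ω)) μ
  integral_eq_zero : ∫ ω, X ω ∂μ = 0
  le_iteratedDeriv_two : ∀ s, 0 ≤ s →
    V * Real.exp (-s) ≤ iteratedDeriv 2 (ProbabilityTheory.cgf X μ) s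
  iteratedDeriv_two_le : ∀ s, 0 ≤ s →
    iteratedDeriv 2 (ProbabilityTheory.cgf X μ) s ≤ V * Real.exp s

namespace NearGaussianCgf

open MeasureTheory ProbabilityTheory Real

variable {Ω Ω' : Type*} {mΩ : MeasurableSpace Ω} {mΩ' : MeasurableSpace Ω'} {μ : Measure Ω}
  {X : Ω → ℝ} {s u V : ℝ}

section

variable (hX : NearGaussianCgf X V μ)
include hX

lemma mem_interior_integrableExpSet (s : ℝ) : s ∈ interior (integrableExpSet X μ) := by
  rw [Set.eq_univ_of_forall (s := integrableExpSet X μ) hX.integrable_exp_mul, interior_univ]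
  trivial

lemma integrable : Integrable X μ :=
  integrable_of_mem_interior_integrableExpSet (hX.mem_interior_integrableExpSet 0)

lemma comp_measurePreserving {ν : Measure Ω'} {f : Ω' → Ω} (hf : MeasurePreserving f ν μ) :
    NearGaussianCgf (X ∘ f) V ν := by
  have h_cgf : cgf (X ∘ f) ν = cgf X μ := by
    ext s
    rw [cgf, cgf, ← hf.map_eq, mgf_map hf.aemeasurable
      (hf.map_eq ▸ (hX.integrable_exp_mul s).aestronglyMeasurable)]
  refine ⟨fun s ↦ hf.integrable_comp_of_integrable (hX.integrable_exp_mul s), ?_, ?_, ?_⟩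
  · rw [← hX.integral_eq_zero, ← hf.map_eq, integral_map hf.aemeasurable
      (hf.map_eq ▸ hX.integrable.aestronglyMeasurable)]
    rfl
  · simpa only [h_cgf] using hX.le_iteratedDeriv_two
  · simpa only [h_cgf] using hX.iteratedDeriv_two_le

variable [IsProbabilityMeasure μ]

lemma variance_eq : Var[X; μ] = V := by
  have h := variance_tilted_mul (hX.mem_interior_integrableExpSet 0)
  have h_le := hX.le_iteratedDeriv_two 0 le_rfl
  have h_ge := hX.iteratedDeriv_two_le 0 le_rfl
  simp only [zero_mul, tilted_const, neg_zero, exp_zero, mul_one] at h h_le h_ge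
  linarith

lemma nonneg : 0 ≤ V := hX.variance_eq ▸ variance_nonneg X μ

lemma integral_abs_le : ∫ ω, |X ω| ∂μ ≤ √V := by
  have h_memLp : MemLp X 2 μ :=
    memLp_of_mem_interior_integrableExpSet (hX.mem_interior_integrableExpSet 0) 2
  refine le_sqrt_of_sq_le ?_
  calc (∫ ω, |X ω| ∂μ) ^ 2 = (∫ ω, |X ω| ^ 2 ∂μ) - Var[fun ω ↦ |X ω|; μ] := by
        rw [variance_eq_sub (X := fun ω ↦ |X ω|) h_memLp.abs]
        simp
    _ ≤ ∫ ω, |X ω| ^ 2 ∂μ := sub_le_self _ (variance_nonneg _ _)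
    _ = V := by
        rw [← hX.variance_eq, variance_of_integral_eq_zero hX.integrable.aemeasurable
          hX.integral_eq_zero]
        simp

lemma iteratedDeriv_two_cgf_mem_Icc (hu : 0 ≤ u) (hus : u ≤ s) (hs₁ : s ≤ 1) :
    iteratedDeriv 2 (cgf X μ) u ∈ Set.Icc (V * (1 - s)) (V * (1 + 2 * s)) := by
  have hV := hX.nonneg
  constructor
  · calc V * (1 - s) ≤ V * exp (-u) := by gcongr; linarith [one_sub_le_exp_neg u]
      _ ≤ iteratedDeriv 2 (cgf X μ) u := hX.le_iteratedDeriv_two u hu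
  · calc iteratedDeriv 2 (cgf X μ) u ≤ V * exp u := hX.iteratedDeriv_two_le u hu
      _ ≤ V * (1 + 2 * s) := by
        gcongr
        linarith [exp_le_one_add_two_mul hu (hus.trans hs₁)]

lemma cgf_mem_Icc (hs : 0 ≤ s) (hs₁ : s ≤ 1) :
    cgf X μ s ∈ Set.Icc (V * (1 - s) * s ^ 2 / 2) (V * (1 + 2 * s) * s ^ 2 / 2) := by
  rcases hs.eq_or_lt with rfl | hs
  · simp
  obtain ⟨u, hu, h_taylor⟩ := exists_cgf_eq_iteratedDeriv_two_cgf_mul hs hX.integral_eq_zero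
    fun t _ ↦ hX.mem_interior_integrableExpSet t
  obtain ⟨h_le, h_ge⟩ := hX.iteratedDeriv_two_cgf_mem_Icc hu.1.le hu.2.le hs₁
  rw [h_taylor]
  exact ⟨by gcongr, by gcongr⟩

lemma deriv_cgf_mem_Icc (hs : 0 ≤ s) (hs₁ : s ≤ 1) :
    deriv (cgf X μ) s ∈ Set.Icc (V * (1 - s) * s) (V * (1 + 2 * s) * s) := by
  have h_zero : deriv (cgf X μ) 0 = 0 := by
    simp [deriv_cgf_zero (hX.mem_interior_integrableExpSet 0), hX.integral_eq_zero]
  rcases hs.eq_or_lt with rfl | hs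
  · simp [h_zero]
  have h_diff (t : ℝ) : DifferentiableAt ℝ (deriv (cgf X μ)) t :=
    (analyticAt_cgf (hX.mem_interior_integrableExpSet t)).deriv.differentiableAt
  obtain ⟨u, hu, h_slope⟩ := exists_deriv_eq_slope (deriv (cgf X μ)) hs
    (fun t _ ↦ (h_diff t).continuousAt.continuousWithinAt)
    fun t _ ↦ (h_diff t).differentiableWithinAt
  obtain ⟨h_le, h_ge⟩ := hX.iteratedDeriv_two_cgf_mem_Icc hu.1.le hu.2.le hs₁
  rw [iteratedDeriv_succ, iteratedDeriv_one, h_slope, h_zero, sub_zero, sub_zero] at h_le h_ge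
  exact ⟨(le_div_iff₀ hs).mp h_le, (div_le_iff₀ hs).mp h_ge⟩

end

lemma exp_div_four_le_measureReal [IsProbabilityMeasure μ] {σ x : ℝ}
    (hX : NearGaussianCgf X (σ ^ 2) μ) (hσ : 0 < σ) (hx : 0 ≤ x) (hxσ : x ≤ σ) (hxσ₃ : x ^ 3 ≤ σ) :
    exp (-x ^ 2 / 2 - 2 * x - 5 / 2) / 4 ≤ μ.real {ω | σ * (x - 3) ≤ X ω} := by
  -- Tilting by `s = x / σ` moves the mean to at least `σ * x - x ^ 2`, where `x ^ 2 ≤ σ`, so the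
  -- Chebyshev window of half-width `2 * σ` around it stays above `σ * (x - 3)`.
  obtain ⟨s, rfl⟩ : ∃ s, x = σ * s := ⟨x / σ, by field_simp⟩
  have hs : 0 ≤ s := nonneg_of_mul_nonneg_right hx hσ
  have hs₁ : s ≤ 1 := le_of_mul_le_mul_left (by simpa using hxσ) hσ
  obtain ⟨h_cgf, -⟩ := hX.cgf_mem_Icc hs hs₁
  obtain ⟨h_mean_ge, h_mean_le⟩ := hX.deriv_cgf_mem_Icc hs hs₁
  obtain ⟨-, h_var⟩ := hX.iteratedDeriv_two_cgf_mem_Icc hs le_rfl hs₁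
  have h_cubic : σ ^ 2 * s ^ 3 ≤ 1 := le_of_mul_le_mul_left (by linarith) hσ
  have h_square : (σ * s) ^ 2 ≤ σ := by
    rcases le_total (σ * s) 1 with h | h
    · exact (pow_le_of_le_one hx h two_ne_zero).trans hxσ
    · exact (pow_le_pow_right₀ h (by norm_num)).trans hxσ₃
  set a := deriv (cgf X μ) s
  have h_location : σ * (σ * s - 3) ≤ a - 2 * σ := by linarith
  have h_exponent : -(σ * s) ^ 2 / 2 - 2 * (σ * s) - 5 / 2 ≤ cgf X μ s - s * (a + 2 * σ) := by
    linarith [mul_le_mul_of_nonneg_left h_mean_le hs]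
  have h_variance : 1 / 4 ≤ 1 - iteratedDeriv 2 (cgf X μ) s / (2 * σ) ^ 2 := by
    have : iteratedDeriv 2 (cgf X μ) s / (2 * σ) ^ 2 ≤ 3 / 4 := by
      rw [div_le_iff₀ (by positivity)]
      linarith [mul_le_mul_of_nonneg_left hs₁ (sq_nonneg σ)]
    linarith
  calc exp (-(σ * s) ^ 2 / 2 - 2 * (σ * s) - 5 / 2) / 4
      ≤ exp (cgf X μ s - s * (a + 2 * σ)) *
          (1 - iteratedDeriv 2 (cgf X μ) s / (2 * σ) ^ 2) := by
        rw [div_eq_mul_one_div]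
        gcongr
    _ ≤ μ.real {ω | a - 2 * σ ≤ X ω} := exp_mul_one_sub_le_measureReal_of_tilted
        (hX.mem_interior_integrableExpSet s) hs (by positivity)
    _ ≤ μ.real {ω | σ * (σ * s - 3) ≤ X ω} := measureReal_mono fun _ ↦ h_location.trans

section Maximum

variable {ι : Type*} [Fintype ι] [IsProbabilityMeasure μ] {X : ι → Ω → ℝ} {σ t : ℝ}

lemma integral_iSup_le [Nonempty ι] (hX : ∀ i, NearGaussianCgf (X i) (σ ^ 2) μ)
    (ht : 1 ≤ t) (htσ : t ^ 3 ≤ σ) (h_card : Fintype.card ι = exp (t ^ 2 / 2)) :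
    ∫ ω, ⨆ i, X i ω ∂μ ≤ σ * (t + 1) := by
  have hσ : t ≤ σ := (le_self_pow₀ ht three_ne_zero).trans htσ
  have hσ₀ : 0 < σ := by linarith
  set s := t / σ
  have hs : 0 ≤ s := by positivity
  have hs₁ : s ≤ 1 := (div_le_one hσ₀).mpr hσ
  have ht_eq : σ * s = t := mul_div_cancel₀ t hσ₀.ne'
  have h_mgf (i : ι) : mgf (X i) μ s ≤ exp (t ^ 2 / 2 + 1) := by
    rw [← exp_cgf ((hX i).integrable_exp_mul s)]
    gcongr
    calc cgf (X i) μ s ≤ σ ^ 2 * (1 + 2 * s) * s ^ 2 / 2 := ((hX i).cgf_mem_Icc hs hs₁).2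
      _ = (σ * s) ^ 2 / 2 + (σ * s) ^ 3 / σ := by field_simp
      _ ≤ t ^ 2 / 2 + 1 := by
        rw [ht_eq]
        gcongr
        exact (div_le_one hσ₀).mpr htσ
  have h_sum : ∑ i, mgf (X i) μ s ≤ exp (t ^ 2 + 1) :=
    calc ∑ i, mgf (X i) μ s ≤ ∑ _i : ι, exp (t ^ 2 / 2 + 1) := sum_le_sum fun i _ ↦ h_mgf i
      _ = exp (t ^ 2 + 1) := by
        rw [sum_const, card_univ, nsmul_eq_mul, h_card, ← exp_add]
        ring_nf
  have h_log : s * ∫ ω, ⨆ i, X i ω ∂μ ≤ t ^ 2 + 1 := by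
    refine (mul_integral_iSup_le_log_sum_mgf (fun i ↦ (hX i).integrable)
      fun i ↦ (hX i).integrable_exp_mul s).trans ?_
    rw [← log_exp (t ^ 2 + 1)]
    gcongr
    exact sum_pos (fun i _ ↦ mgf_pos ((hX i).integrable_exp_mul s)) univ_nonempty
  have hs_pos : 0 < s := by positivity
  refine le_of_mul_le_mul_left (h_log.trans ?_) hs_pos
  rw [← mul_assoc, mul_comm s, ht_eq]
  linarith

lemma one_add_mul_prod_measureReal_lt_le_one (hX : ∀ i, NearGaussianCgf (X i) (σ ^ 2) μ)
    (ht : 3 ≤ t) (htσ : t ^ 3 ≤ σ) (h_card : Fintype.card ι = exp (t ^ 2 / 2)) :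
    (1 + exp (t - 1) / 4) * ∏ i, μ.real {ω | X i ω < σ * (t - 6)} ≤ 1 := by
  have hσ : t ≤ σ := (le_self_pow₀ (by linarith) three_ne_zero).trans htσ
  -- The tail bound at `x = t - 3` rather than `t` makes `card ι * P` exponentially large in `t`.
  set P := exp (-(t - 3) ^ 2 / 2 - 2 * (t - 3) - 5 / 2) / 4 with hP
  have h_card_mul : Fintype.card ι * P = exp (t - 1) / 4 := by
    rw [h_card, hP, ← mul_div_assoc, ← exp_add]
    ring_nf
  have h_lt (i : ι) : μ.real {ω | X i ω < σ * (t - 6)} ≤ exp (-P) := by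
    have h_tail : P ≤ μ.real {ω | σ * (t - 6) ≤ X i ω} := by
      have h_cube : (t - 3) ^ 3 ≤ t ^ 3 := by gcongr; linarith
      have := (hX i).exp_div_four_le_measureReal (x := t - 3) (by linarith) (by linarith)
        (by linarith) (h_cube.trans htσ)
      rwa [show t - 3 - 3 = t - 6 by ring] at this
    have h_compl : {ω | X i ω < σ * (t - 6)} = {ω | σ * (t - 6) ≤ X i ω}ᶜ := by
      ext
      simp
    rw [h_compl, probReal_compl_eq_one_sub₀
      (nullMeasurableSet_le aemeasurable_const (hX i).integrable.aemeasurable)]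
    linarith [one_sub_le_exp_neg P]
  calc (1 + exp (t - 1) / 4) * ∏ i, μ.real {ω | X i ω < σ * (t - 6)}
      ≤ exp (exp (t - 1) / 4) * ∏ _i : ι, exp (-P) := by
        gcongr with i
        · linarith [add_one_le_exp (exp (t - 1) / 4)]
        · exact h_lt i
    _ = 1 := by
        rw [prod_const, card_univ, ← exp_nat_mul, mul_neg, h_card_mul, ← exp_add, add_neg_cancel,
          exp_zero]

lemma le_integral_iSup [Nonempty ι] (hX : ∀ i, NearGaussianCgf (X i) (σ ^ 2) μ)
    (h_indep : iIndepFun X μ) (hσ : 0 ≤ σ) (htσ : t ^ 3 ≤ σ)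
    (h_card : Fintype.card ι = exp (t ^ 2 / 2)) :
    σ * (t - 8) ≤ ∫ ω, ⨆ i, X i ω ∂μ := by
  obtain ⟨i₀⟩ := ‹Nonempty ι›
  have h_int (i : ι) : Integrable (X i) μ := (hX i).integrable
  rcases le_or_gt t 8 with ht | ht
  · exact (mul_nonpos_of_nonneg_of_nonpos hσ (by linarith)).trans
      ((hX i₀).integral_eq_zero ▸ integral_le_integral_iSup h_int i₀)
  have h_abs : ∫ ω, |X i₀ ω| ∂μ ≤ σ := (hX i₀).integral_abs_le.trans_eq (sqrt_sq hσ)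
  have h_prod := one_add_mul_prod_measureReal_lt_le_one hX (by linarith) htσ h_card
  set Q := ∏ i, μ.real {ω | X i ω < σ * (t - 6)}
  have h_exp : t - 6 ≤ 1 + exp (t - 1) / 4 := by
    linarith [quadratic_le_exp_of_nonneg (x := t - 1) (by linarith), sq_nonneg (t - 4)]
  have h_small : (t - 6) * Q ≤ 1 := h_prod.trans' (by gcongr)
  calc σ * (t - 8) ≤ σ * (t - 6) * (1 - Q) - σ := by
        linarith [mul_le_mul_of_nonneg_left h_small hσ]
    _ ≤ σ * (t - 6) * (1 - Q) - ∫ ω, |X i₀ ω| ∂μ := by gcongr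
    _ ≤ ∫ ω, ⨆ i, X i ω ∂μ :=
        mul_one_sub_prod_sub_integral_abs_le_integral_iSup h_indep h_int _ i₀

theorem abs_integral_iSup_sub_le (hX : ∀ i, NearGaussianCgf (X i) (σ ^ 2) μ)
    (h_indep : iIndepFun X μ) (h_card : 2 ≤ Fintype.card ι)
    (hσ : √(2 * log (Fintype.card ι)) ^ 3 ≤ σ) :
    |∫ ω, ⨆ i, X i ω ∂μ - σ * √(2 * log (Fintype.card ι))| ≤ 8 * σ := by
  have : Nonempty ι := Fintype.card_pos_iff.mp (by lia)
  have h_cast : (2 : ℝ) ≤ Fintype.card ι := mod_cast h_card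
  have h_log : 1 ≤ 2 * log (Fintype.card ι) := by
    linarith [log_two_gt_d9, log_le_log two_pos h_cast]
  set t := √(2 * log (Fintype.card ι)) with ht_def
  have ht : 1 ≤ t := one_le_sqrt.mpr h_log
  have h_card_eq : Fintype.card ι = exp (t ^ 2 / 2) := by
    rw [ht_def, sq_sqrt (by linarith), mul_div_cancel_left₀ _ two_ne_zero, exp_log (by linarith)]
  have hσ₀ : 0 ≤ σ := hσ.trans' (by positivity)
  rw [abs_le]
  constructor
  · linarith [le_integral_iSup hX h_indep hσ₀ hσ h_card_eq]
  · linarith [integral_iSup_le hX ht hσ h_card_eq]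

end Maximum

end NearGaussianCgf

section Binomial

open MeasureTheory ProbabilityTheory Real

variable {n m : ℕ} {p : unitInterval}

lemma one_sub_add_mul_exp_pos (p : unitInterval) (s : ℝ) : 0 < 1 - p + p * exp s := by
  rcases p.2.1.eq_or_lt with hp | hp
  · simp [← hp]
  · linarith [mul_pos hp (exp_pos s), p.2.2]

lemma mgf_binomial (m : ℕ) (p : unitInterval) (s : ℝ) :
    mgf (fun k : ℕ ↦ (k : ℝ)) Bin(m, p) s = (1 - p + p * exp s) ^ m := by
  rw [mgf, integral_binomial, ← Nat.range_succ_eq_Iic, add_comm (1 - _ : ℝ), add_pow]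
  refine sum_congr rfl fun k _ ↦ ?_
  rw [smul_eq_mul, mul_comm s, exp_nat_mul, mul_pow]
  ring

lemma cgf_binomial_sub_mean (m : ℕ) (p : unitInterval) :
    cgf (fun k : ℕ ↦ (k : ℝ) - m * p) Bin(m, p) =
      fun s ↦ m * (log (1 - p + p * exp s) - p * s) := by
  ext s
  simp only [cgf, sub_eq_add_neg _ ((m : ℝ) * p)]
  rw [mgf_add_const, mgf_binomial,
    log_mul (pow_pos (one_sub_add_mul_exp_pos p s) m).ne' (exp_pos _).ne', log_pow, log_exp]
  ring

lemma deriv_cgf_binomial_sub_mean (m : ℕ) (p : unitInterval) :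
    deriv (cgf (fun k : ℕ ↦ (k : ℝ) - m * p) Bin(m, p)) =
      fun s ↦ m * ((p : ℝ) * exp s / (1 - p + p * exp s) - p) := by
  ext s
  have h_denom : HasDerivAt (fun s ↦ 1 - (p : ℝ) + p * exp s) (p * exp s) s :=
    ((hasDerivAt_exp s).const_mul (p : ℝ)).const_add _
  rw [cgf_binomial_sub_mean]
  simpa using (((h_denom.log (one_sub_add_mul_exp_pos p s).ne').sub
    ((hasDerivAt_id s).const_mul (p : ℝ))).const_mul (m : ℝ)).deriv

lemma iteratedDeriv_two_cgf_binomial_sub_mean (m : ℕ) (p : unitInterval) (s : ℝ) :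
    iteratedDeriv 2 (cgf (fun k : ℕ ↦ (k : ℝ) - m * p) Bin(m, p)) s =
      m * p * (1 - p) * exp s / (1 - p + p * exp s) ^ 2 := by
  have h_num : HasDerivAt (fun s ↦ (p : ℝ) * exp s) (p * exp s) s :=
    (hasDerivAt_exp s).const_mul (p : ℝ)
  have h_deriv := ((h_num.div (h_num.const_add (1 - p : ℝ))
    (one_sub_add_mul_exp_pos p s).ne').sub_const (p : ℝ)).const_mul (m : ℝ)
  rw [iteratedDeriv_succ, iteratedDeriv_one, deriv_cgf_binomial_sub_mean]
  refine h_deriv.deriv.trans ?_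
  ring

lemma nearGaussianCgf_binomial (m : ℕ) (p : unitInterval) :
    NearGaussianCgf (fun k : ℕ ↦ (k : ℝ) - m * p) (m * p * (1 - p)) Bin(m, p) := by
  have hp : (0 : ℝ) ≤ p := p.2.1
  have hp₁ : (0 : ℝ) ≤ 1 - p := sub_nonneg.mpr p.2.2
  refine ⟨fun s ↦ integrable_binomial _, ?_, fun s hs ↦ ?_, fun s hs ↦ ?_⟩
  · have h_mean := deriv_cgf_zero (X := fun k : ℕ ↦ (k : ℝ) - m * p) (μ := Bin(m, p)) (by
      rw [Set.eq_univ_of_forall (s := integrableExpSet _ _) fun s ↦ integrable_binomial _]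
      simp)
    simpa [deriv_cgf_binomial_sub_mean] using h_mean.symm
  · rw [iteratedDeriv_two_cgf_binomial_sub_mean]
    have h_denom_le : 1 - p + p * exp s ≤ exp s := by nlinarith [one_le_exp hs]
    calc (m : ℝ) * p * (1 - p) * exp (-s) = m * p * (1 - p) * exp s / exp s ^ 2 := by
          rw [exp_neg]; field_simp
      _ ≤ m * p * (1 - p) * exp s / (1 - p + p * exp s) ^ 2 := by
          have := one_sub_add_mul_exp_pos p s
          gcongr
  · rw [iteratedDeriv_two_cgf_binomial_sub_mean]
    have h_denom_ge : 1 ≤ 1 - p + p * exp s := by nlinarith [one_le_exp hs]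
    exact div_le_self (by positivity) (one_le_pow₀ h_denom_ge)

/-- The law `Bin(m, p)` carried by `Fin (m + 1)`, the type in which `expMaxBinom` lets each
coordinate range. -/
noncomputable def finBinomial (m : ℕ) (p : unitInterval) : Measure (Fin (m + 1)) :=
  Bin(m, p).comap Fin.val

lemma measurableEmbedding_val (m : ℕ) : MeasurableEmbedding (Fin.val : Fin (m + 1) → ℕ) :=
  ⟨Fin.val_injective, .of_discrete, fun _ _ ↦ .of_discrete⟩

lemma ae_mem_range_val_binomial : ∀ᵐ k ∂Bin(m, p), k ∈ Set.range (Fin.val : Fin (m + 1) → ℕ) := by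
  filter_upwards [ae_le_of_hasLaw_binomial HasLaw.id] with k hk
  exact ⟨⟨k, Nat.lt_succ_of_le hk⟩, rfl⟩

lemma measurePreserving_val_finBinomial (m : ℕ) (p : unitInterval) :
    MeasurePreserving Fin.val (finBinomial m p) Bin(m, p) := by
  refine ⟨.of_discrete, ?_⟩
  rw [finBinomial, (measurableEmbedding_val m).map_comap,
    Measure.restrict_eq_self_of_ae_mem ae_mem_range_val_binomial]

instance isProbabilityMeasure_finBinomial : IsProbabilityMeasure (finBinomial m p) :=
  (measurableEmbedding_val m).isProbabilityMeasure_comap ae_mem_range_val_binomial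

lemma finBinomial_real_singleton (m : ℕ) (p : unitInterval) (k : Fin (m + 1)) :
    (finBinomial m p).real {k} = binomPMF m p k := by
  rw [finBinomial, measureReal_def, (measurableEmbedding_val m).comap_apply, Set.image_singleton,
    ← measureReal_def, binomial_real_singleton, binomPMF]

lemma cast_maxEntry [NeZero n] (j : Fin n → Fin (m + 1)) : (maxEntry j : ℝ) = ⨆ i, (j i : ℝ) := by
  rw [maxEntry, ← sup'_eq_sup univ_nonempty, Nat.cast_finsetSup', sup'_univ_eq_ciSup]

lemma expMaxBinom_sub_eq_integral [NeZero n] (m : ℕ) (p : unitInterval) (c : ℝ) :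
    expMaxBinom n m p - c =
      ∫ j, ⨆ i, ((j i : ℝ) - c) ∂Measure.pi fun _ : Fin n ↦ finBinomial m p := by
  have h_iSup (j : Fin n → Fin (m + 1)) : ⨆ i, ((j i : ℝ) - c) = maxEntry j - c := by
    rw [cast_maxEntry, ciSup_sub (Set.finite_range _).bddAbove]
  simp_rw [h_iSup]
  rw [integral_sub .of_finite (integrable_const c), integral_fintype .of_finite]
  simp [expMaxBinom, measureReal_def, ENNReal.toReal_prod, ← finBinomial_real_singleton]

theorem stmt5_general {n m : ℕ} {p : ℝ} (hn : 2 ≤ n) (hp₀ : 0 ≤ p) (hp₁ : p ≤ 1)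
    (h : 8 * log n ^ 3 ≤ m * p * (1 - p)) :
    |(expMaxBinom n m p - m * p) / √(m * p * (1 - p)) - √(2 * log n)| ≤ 8 := by
  lift p to unitInterval using ⟨hp₀, hp₁⟩
  have : NeZero n := ⟨by lia⟩
  have h_log : 0 < log n := log_pos (mod_cast hn)
  have hV : 0 < (m : ℝ) * p * (1 - p) := h.trans_lt' (by positivity)
  set σ := √(m * p * (1 - p))
  have hσ : 0 < σ := sqrt_pos.mpr hV
  have hσ_sq : σ ^ 2 = m * p * (1 - p) := sq_sqrt hV.le
  have h_cube : √(2 * log n) ^ 3 ≤ σ := by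
    refine le_sqrt_of_sq_le (h.trans_eq' ?_)
    rw [← pow_mul, mul_comm 3, pow_mul, sq_sqrt (by positivity)]
    ring
  set X : Fin n → (Fin n → Fin (m + 1)) → ℝ := fun i j ↦ (j i : ℝ) - m * p
  have hX (i : Fin n) :
      NearGaussianCgf (X i) (σ ^ 2) (Measure.pi fun _ : Fin n ↦ finBinomial m p) :=
    hσ_sq ▸ (nearGaussianCgf_binomial m p).comp_measurePreserving
      ((measurePreserving_val_finBinomial m p).comp (measurePreserving_eval _ i))
  have h_indep : iIndepFun X (Measure.pi fun _ : Fin n ↦ finBinomial m p) :=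
    iIndepFun_pi (X := fun _ (k : Fin (m + 1)) ↦ (k : ℝ) - m * p) fun _ ↦ .of_discrete
  have h_max := NearGaussianCgf.abs_integral_iSup_sub_le hX h_indep
  rw [← expMaxBinom_sub_eq_integral, Fintype.card_fin] at h_max
  rw [div_sub' hσ.ne', abs_div, abs_of_pos hσ, div_le_iff₀ hσ]
  exact h_max hn h_cube

end Binomial

/-- For `Z_i = (Y_i - mp)/√(mp(1-p))` the standardized i.i.d. binomials, one has
`E[max_i Z_i] = (E[max_i Y_i] - mp)/√(mp(1-p))`, and this is `√(2 ln n) + O(1)` provided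
`mp(1-p) ≥ K((ln n)³ + m^{6/7})`. -/
theorem stmt5 :
    ∃ K > 0, ∃ C > 0, ∀ (n m : ℕ) (p : ℝ), 2 ≤ n → 1 ≤ m → 0 < p → p < 1 →
      K * ((Real.log n) ^ 3 + (m : ℝ) ^ ((6 : ℝ) / 7)) ≤ m * p * (1 - p) →
      |(expMaxBinom n m p - m * p) / Real.sqrt (m * p * (1 - p)) -
          Real.sqrt (2 * Real.log n)| ≤ C := by
  refine ⟨8, by norm_num, 8, by norm_num, fun n m p hn _ hp₀ hp₁ h ↦ ?_⟩
  have h_log : 8 * Real.log n ^ 3 ≤ 8 * (Real.log n ^ 3 + (m : ℝ) ^ ((6 : ℝ) / 7)) := by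
    gcongr
    exact le_add_of_nonneg_right (by positivity)
  exact stmt5_general hn hp₀.le hp₁.le (h_log.trans h)
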